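/- If C and C' are convex subsets of Euclidean spaces (with nonempty interior), then a function f : C → C' has continuous derivatives of all orders if and only if for every smooth curve γ : ℝ → C, the composite f ∘ γ is a smooth curve in C'. -/

import Mathlib

open Set

/-!
A smooth map preserves smooth curves by the chain rule. For the converse, call `f` arc-smooth if it
maps smooth curves in its domain to smooth curves.

* A smooth curve can be made to pass, at times `τ n → 0`, through any sequence converging fast enough,
  with prescribed small velocities (`special_curve`). Hence arc-smooth maps on convex sets are
  continuous, and for arc-smooth functions on the whole space all iterated directional derivatives are
  locally bounded.
* On the whole space, arc-smooth maps are smooth (Boman's theorem, `ArcSmoothOn.contDiff`). After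
  multiplication by a bump function, the bounds on directional derivatives make the Fourier transform
  rapidly decreasing, and Fourier inversion gives smoothness.
* At the boundary of `C`, let `w` be a direction pointing into `C` and `γ` a smooth curve in `C`. The
  map `(t, u) ↦ f (γ t + ρ u • w)`, where `ρ u = u² / (1 + u²)`, is arc-smooth on the plane, hence
  smooth, and it is even in `u`. So `f` has a one-sided derivative in the direction `w` at the points
  `γ t`, and this derivative depends smoothly on `t` (`ArcSmoothOn.exists_contDiff_ray_deriv`).
* The inward directions contain a basis. Since two nearby points of `C` can both be moved inwards to a
  common point, the one-sided derivatives along such a basis, being arc-smooth and so continuous,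
  assemble to a Fréchet derivative within `C` (`hasFDerivWithinAt_of_ray_deriv`).
* The derivative `fderivWithin ℝ f C` is again arc-smooth, so induction on the order of
  differentiability finishes the proof (`ArcSmoothOn.contDiffOn_nat`).
-/

section
open Filter Topology MeasureTheory
open scoped ContDiff
universe u

/-! ### Special curves and arc-smooth maps -/

/-- Coefficients which decay fast enough, depending only on the sup norms of the derivatives of the
`g n`, make the series `∑ g n • y n` smooth: the `k`-th derivatives are dominated by a geometric
series from the index `k` on. -/
theorem exists_pos_contDiff_tsum {E : Type*} [NormedAddCommGroup E] [NormedSpace ℝ E]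
    [CompleteSpace E] (g : ℕ → ℝ → ℝ) (hg : ∀ n, ContDiff ℝ ∞ (g n))
    (hc : ∀ n, HasCompactSupport (g n)) :
    ∃ ε : ℕ → ℝ, (∀ n, 0 < ε n) ∧ ∀ y : ℕ → E, (∀ n, ‖y n‖ ≤ ε n) →
      ContDiff ℝ ∞ (fun t => ∑' n, g n t • y n) := by
  have hB : ∀ n k : ℕ, ∃ B : ℝ, ∀ t, ‖iteratedFDeriv ℝ k (g n) t‖ ≤ B := fun n k =>
    (((hg n).continuous_iteratedFDeriv (m := k) (by exact_mod_cast le_top))).bounded_above_of_compact_support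
      ((hc n).iteratedFDeriv k)
  choose B hB using hB
  have hB0 : ∀ n k, 0 ≤ B n k := fun n k => (norm_nonneg _).trans (hB n k 0)
  have hS : ∀ n, 0 < 1 + ∑ k ∈ Finset.range (n + 1), B n k := fun n => by
    have := Finset.sum_nonneg (s := Finset.range (n + 1)) (fun k _ => hB0 n k)
    linarith
  refine ⟨fun n => (1 / 2) ^ n / (1 + ∑ k ∈ Finset.range (n + 1), B n k),
    fun n => div_pos (by positivity) (hS n), fun y hy => ?_⟩
  refine contDiff_tsum_of_eventually (v := fun _ n => (1 / 2 : ℝ) ^ n)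
    (fun n => (hg n).smul contDiff_const) (fun k _ => summable_geometric_two) (fun k _ => ?_)
  rw [Nat.cofinite_eq_atTop]
  filter_upwards [eventually_ge_atTop k] with n hn t
  have h1 := (ContinuousLinearMap.toSpanSingleton ℝ (y n)).norm_iteratedFDeriv_comp_left
    (f := g n) (x := t) (N := ∞) (n := k) (hg n).contDiffAt (by exact_mod_cast le_top)
  have h2 : (ContinuousLinearMap.toSpanSingleton ℝ (y n)) ∘ (g n) = fun t => g n t • y n := by
    ext t; simp
  rw [h2, ContinuousLinearMap.norm_toSpanSingleton] at h1
  refine h1.trans ?_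
  have h3 : B n k ≤ 1 + ∑ k ∈ Finset.range (n + 1), B n k := by
    have := Finset.single_le_sum (f := fun k => B n k) (fun k _ => hB0 n k)
      (Finset.mem_range.2 (Nat.lt_succ_of_le hn))
    linarith
  calc _ ≤ (1 / 2) ^ n / (1 + ∑ k ∈ Finset.range (n + 1), B n k) *
        (1 + ∑ k ∈ Finset.range (n + 1), B n k) :=
        mul_le_mul (hy n) ((hB n k t).trans h3) (norm_nonneg _) (div_pos (by positivity) (hS n)).le
    _ = _ := div_mul_cancel₀ _ (hS n).ne'

/-- The special curve lemma: there are universal times `τ n → 0` and bounds `ε n` such that any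
sequence of affine germs `x₀ + y n + (t - τ n) • w n` with `‖y n‖, ‖w n‖ ≤ ε n` is realised near the
times `τ n` by one smooth curve through `x₀`. Every value of the curve lies on a segment from `x₀` to
a point of one of these affine curves, which keeps it inside convex sets. The curve is
`x₀ + ∑ h n t • (y n + (t - τ n) • w n)` for bumps `h n` with disjoint supports near `τ n = 2⁻ⁿ`. -/
theorem special_curve (E : Type*) [NormedAddCommGroup E] [NormedSpace ℝ E] [CompleteSpace E] :
    ∃ τ : ℕ → ℝ, ∃ ε : ℕ → ℝ, Tendsto τ atTop (𝓝 0) ∧ (∀ n, 0 < ε n) ∧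
      ∀ (x₀ : E) (y w : ℕ → E), (∀ n, ‖y n‖ ≤ ε n) → (∀ n, ‖w n‖ ≤ ε n) →
        ∃ c : ℝ → E, ContDiff ℝ ∞ c ∧ c 0 = x₀ ∧
          (∀ n, c =ᶠ[𝓝 (τ n)] fun t => x₀ + (y n + (t - τ n) • w n)) ∧
          ∀ t, c t = x₀ ∨ ∃ n, ∃ θ ∈ Icc (0 : ℝ) 1, c t = x₀ + θ • (y n + (t - τ n) • w n) := by
  set τ : ℕ → ℝ := fun n => (1 / 2) ^ n with hτ
  have hτ0 : ∀ n, 0 < τ n := fun n => by positivity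
  let h : (n : ℕ) → ContDiffBump (τ n) := fun n =>
    ⟨τ n / 8, τ n / 4, by linarith [hτ0 n], by linarith [hτ0 n]⟩
  have hsupp : ∀ n t, h n t ≠ 0 → 3 / 4 * τ n < t ∧ t < 5 / 4 * τ n := by
    intro n t ht
    have : t ∈ Function.support (h n) := ht
    rw [(h n).support_eq, Metric.mem_ball, Real.dist_eq, abs_lt] at this
    have h4 : (h n).rOut = τ n / 4 := rfl
    rw [h4] at this
    constructor <;> linarith [this.1, this.2]
  have hlt : ∀ n m, n < m → τ m ≤ τ n / 2 := by
    intro n m hnm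
    have h1 : τ m ≤ τ (n + 1) := pow_le_pow_of_le_one (by norm_num) (by norm_num) hnm
    have h2 : τ (n + 1) = τ n / 2 := by simp only [hτ, pow_succ]; ring
    linarith
  -- the supports of the bumps are pairwise disjoint
  have hdisj : ∀ n m t, h n t ≠ 0 → m ≠ n → h m t = 0 := by
    intro n m t hn hm
    by_contra hmt
    have a := hsupp n t hn
    have b := hsupp m t hmt
    rcases lt_or_gt_of_ne hm with hm | hm
    · have := hlt _ _ hm; linarith [a.1, b.1, a.2, b.2, hτ0 m]
    · have := hlt _ _ hm; linarith [a.1, b.1, a.2, b.2, hτ0 n]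
  obtain ⟨ε₁, hε₁, H₁⟩ := exists_pos_contDiff_tsum (E := E) (fun n t => h n t)
    (fun n => (h n).contDiff) (fun n => (h n).hasCompactSupport)
  obtain ⟨ε₂, hε₂, H₂⟩ := exists_pos_contDiff_tsum (E := E) (fun n t => h n t * (t - τ n))
    (fun n => (h n).contDiff.mul (contDiff_id.sub contDiff_const))
    (fun n => (h n).hasCompactSupport.mul_right)
  refine ⟨τ, fun n => min (ε₁ n) (ε₂ n), tendsto_pow_atTop_nhds_zero_of_lt_one (by norm_num)
    (by norm_num), fun n => lt_min (hε₁ n) (hε₂ n), fun x₀ y w hy hw => ?_⟩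
  have key : ∀ n t, h n t ≠ 0 → x₀ + (∑' n, h n t • y n + ∑' n, (h n t * (t - τ n)) • w n) =
      x₀ + h n t • (y n + (t - τ n) • w n) := by
    intro n t hn
    rw [tsum_eq_single n (fun m hm => by rw [hdisj n m t hn hm, zero_smul]),
      tsum_eq_single n (fun m hm => by rw [hdisj n m t hn hm, zero_mul, zero_smul]),
      smul_add, mul_smul]
  have key0 : ∀ t, (∀ n, h n t = 0) →
      x₀ + (∑' n, h n t • y n + ∑' n, (h n t * (t - τ n)) • w n) = x₀ := by
    intro t ht
    simp [ht]
  refine ⟨fun t => x₀ + (∑' n, h n t • y n + ∑' n, (h n t * (t - τ n)) • w n),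
    contDiff_const.add ((H₁ y fun n => (hy n).trans (min_le_left _ _)).add
      (H₂ w fun n => (hw n).trans (min_le_right _ _))), ?_, fun n => ?_, fun t => ?_⟩
  · refine key0 0 fun n => ?_
    by_contra hn
    have := hsupp n 0 hn
    linarith [this.1, hτ0 n]
  · filter_upwards [(h n).eventuallyEq_one] with t ht
    have ht : h n t = 1 := ht
    rw [key n t (by rw [ht]; norm_num), ht, one_smul]
  · by_cases hn : ∃ n, h n t ≠ 0
    · obtain ⟨n, hn⟩ := hn
      exact Or.inr ⟨n, h n t, ⟨(h n).nonneg, (h n).le_one⟩, key n t hn⟩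
    · push Not at hn
      exact Or.inl (key0 t hn)

/-- `f` is arc-smooth on `A` if it maps smooth curves with image in `A` to smooth curves. Curves are
total maps `ℝ → E`, and values of `f` outside `A` play no role. -/
def ArcSmoothOn {E F : Type*} [NormedAddCommGroup E] [NormedSpace ℝ E] [NormedAddCommGroup F]
    [NormedSpace ℝ F] (f : E → F) (A : Set E) : Prop :=
  ∀ γ : ℝ → E, ContDiff ℝ ∞ γ → (∀ t, γ t ∈ A) → ContDiff ℝ ∞ (f ∘ γ)

/-- If `x n → x₀` fast while `f (x n)` stays away from `f x₀`, a special curve through the `x n`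
contradicts the continuity of `f` along it. -/
theorem ArcSmoothOn.continuousOn {E F : Type*} [NormedAddCommGroup E] [NormedSpace ℝ E]
    [CompleteSpace E] [NormedAddCommGroup F] [NormedSpace ℝ F] {f : E → F} {A : Set E}
    (hf : ArcSmoothOn f A) (hA : Convex ℝ A) : ContinuousOn f A := by
  obtain ⟨τ, ε, hτ, hε, H⟩ := special_curve E
  rw [Metric.continuousOn_iff]
  by_contra! hcon
  obtain ⟨x₀, hx₀, δ, hδ, hcon⟩ := hcon
  choose x hxA hx hfx using fun n => hcon (ε n) (hε n)
  obtain ⟨c, hc, hc0, hcn, hct⟩ := H x₀ (fun n => x n - x₀) (fun _ => 0)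
    (fun n => by rw [← dist_eq_norm]; exact (hx n).le) (fun n => by simpa using (hε n).le)
  have hcA : ∀ t, c t ∈ A := by
    intro t
    rcases hct t with h | ⟨n, θ, hθ, h⟩
    · rwa [h]
    · rw [h]
      simpa using hA.add_smul_sub_mem hx₀ (hxA n) hθ
  have h1 : Tendsto (f ∘ c ∘ τ) atTop (𝓝 (f x₀)) := by
    have := ((hf c hc hcA).continuous.tendsto 0).comp hτ
    simpa [Function.comp_def, hc0] using this
  obtain ⟨n, hn⟩ := ((Metric.tendsto_nhds.1 h1) δ hδ).exists
  have h2 : c (τ n) = x n := by simpa using (hcn n).eq_of_nhds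
  simp only [Function.comp_apply, h2] at hn
  exact absurd hn (not_lt.2 (hfx n))

/-! ### Directional derivatives of arc-smooth functions and their Fourier transforms -/

/-- The iterated directional derivative `∂ᵥʲ G (x)`, defined on the line through `x` as the `j`-th
derivative of `s ↦ G (x + s • v)` at `0`. -/
noncomputable def lineIter {V : Type*} [NormedAddCommGroup V] [NormedSpace ℝ V]
    (G : V → ℂ) (v : V) (j : ℕ) (x : V) : ℂ :=
  iteratedDeriv j (fun s : ℝ => G (x + s • v)) 0

section
variable {V : Type*} [NormedAddCommGroup V] [NormedSpace ℝ V] {G : V → ℂ}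

theorem ArcSmoothOn.contDiff_line (hG : ArcSmoothOn G univ) (v x : V) :
    ContDiff ℝ ∞ (fun s : ℝ => G (x + s • v)) :=
  hG (fun s => x + s • v) (by fun_prop) fun _ => mem_univ _

/-- `∂ᵥ (∂ᵥʲ G) = ∂ᵥʲ⁺¹ G`, since `∂ᵥʲ G` along the line through `x` is the `j`-th derivative there. -/
theorem ArcSmoothOn.hasLineDerivAt_lineIter (hG : ArcSmoothOn G univ) (v : V) (j : ℕ) (x : V) :
    HasLineDerivAt ℝ (lineIter G v j) (lineIter G v (j + 1) x) x v := by
  have h1 : ∀ t : ℝ, lineIter G v j (x + t • v) =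
      iteratedDeriv j (fun s : ℝ => G (x + s • v)) t := by
    intro t
    have h := congrFun (iteratedDeriv_comp_const_add j (fun s : ℝ => G (x + s • v)) t) 0
    rw [add_zero] at h
    rw [← h, lineIter]
    congr 1
    ext s
    rw [add_smul, add_assoc]
  have h2 : Differentiable ℝ (iteratedDeriv j (fun s : ℝ => G (x + s • v))) :=
    (hG.contDiff_line v x).differentiable_iteratedDeriv j (by exact_mod_cast ENat.natCast_lt_top j)
  unfold HasLineDerivAt
  simp only [h1]
  rw [lineIter, iteratedDeriv_succ]
  exact (h2 0).hasDerivAt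

theorem lineIter_eq_zero (v : V) (j : ℕ) {x : V} (hx : x ∉ tsupport G) : lineIter G v j x = 0 := by
  have h1 : G =ᶠ[𝓝 x] 0 := notMem_tsupport_iff_eventuallyEq.1 hx
  have h2 : (fun s : ℝ => G (x + s • v)) =ᶠ[𝓝 0] fun _ => 0 := by
    have h3 : Tendsto (fun s : ℝ => x + s • v) (𝓝 0) (𝓝 x) := by
      have : Continuous (fun s : ℝ => x + s • v) := by fun_prop
      simpa using this.tendsto 0
    exact h3.eventually h1
  rw [lineIter, h2.iteratedDeriv_eq]
  simp

/-- If `∂ᵥʲ G` were unbounded near `x₀`, a special curve passing through points `x n → x₀` with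
velocity `s n • v`, `s n → 0`, would see `j`-th derivatives `s n ^ j • ∂ᵥʲ G (x n)` blowing up. -/
theorem ArcSmoothOn.locally_bounded_lineIter [CompleteSpace V] (hG : ArcSmoothOn G univ) (v : V)
    (j : ℕ) (x₀ : V) : ∃ δ > 0, ∃ M : ℝ, ∀ x, dist x x₀ < δ → ‖lineIter G v j x‖ ≤ M := by
  obtain ⟨τ, ε, hτ, hε, H⟩ := special_curve V
  by_contra! hcon
  set s : ℕ → ℝ := fun n => ε n / (1 + ‖v‖) with hs
  have hv : 0 < 1 + ‖v‖ := by positivity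
  have hs0 : ∀ n, 0 < s n := fun n => div_pos (hε n) hv
  -- the threshold `n / s n ^ j` compensates the factor `s n ^ j` coming from the speed of the curve
  choose x hx hxM using fun n : ℕ => hcon (ε n) (hε n) (n / s n ^ j)
  obtain ⟨c, hc, -, hcn, -⟩ := H x₀ (fun n => x n - x₀) (fun n => s n • v)
    (fun n => by rw [← dist_eq_norm]; exact (hx n).le) (fun n => by
      rw [norm_smul, Real.norm_of_nonneg (hs0 n).le, hs, div_mul_eq_mul_div, div_le_iff₀ hv]
      exact mul_le_mul_of_nonneg_left (by linarith [norm_nonneg v]) (hε n).le)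
  have hGc : ContDiff ℝ ∞ (G ∘ c) := hG c hc fun _ => mem_univ _
  -- at `τ n` the curve has the same jet as a line through `x n` with velocity `s n • v`
  have hjet : ∀ n, iteratedDeriv j (G ∘ c) (τ n) = s n ^ j • lineIter G v j (x n) := by
    intro n
    have h1 : G ∘ c =ᶠ[𝓝 (τ n)] fun t => (fun r : ℝ => G (x n + r • v)) (s n * (t - τ n)) := by
      filter_upwards [hcn n] with t ht
      simp only [Function.comp_apply, ht]
      congr 1
      rw [mul_comm, mul_smul]
      abel
    -- the affine reparametrization `t ↦ s n * (t - τ n)` contributes the factor `s n ^ j`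
    rw [h1.iteratedDeriv_eq, iteratedDeriv_comp_sub_const (f := fun u => (fun r : ℝ => G (x n + r • v)) (s n * u))]
    have h2 := iteratedDeriv_comp_const_smul (n := j) (f := fun r : ℝ => G (x n + r • v))
      ((hG.contDiff_line v (x n)).of_le (by exact_mod_cast le_top)) (s n)
    simp only [h2, sub_self, mul_zero]
    rfl
  have h3 : Continuous (iteratedDeriv j (G ∘ c)) :=
    hGc.continuous_iteratedDeriv j (by exact_mod_cast le_top)
  have h4 := ((h3.tendsto 0).comp hτ).norm
  have h5 : ∀ n : ℕ, (n : ℝ) ≤ ‖iteratedDeriv j (G ∘ c) (τ n)‖ := by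
    intro n
    rw [hjet, norm_smul, norm_pow, Real.norm_of_nonneg (hs0 n).le, mul_comm]
    exact (div_le_iff₀ (pow_pos (hs0 n) j)).1 (hxM n).le
  exact not_tendsto_nhds_of_tendsto_atTop
    (tendsto_atTop_mono h5 tendsto_natCast_atTop_atTop) _ h4

theorem ArcSmoothOn.bounded_lineIter [CompleteSpace V] (hG : ArcSmoothOn G univ)
    (hGc : HasCompactSupport G) (v : V) (j : ℕ) : ∃ M : ℝ, ∀ x, ‖lineIter G v j x‖ ≤ M := by
  obtain ⟨M, hM⟩ : ∃ M : ℝ, ∀ x ∈ tsupport G, ‖lineIter G v j x‖ ≤ M := by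
    refine hGc.isCompact.induction_on (p := fun s => ∃ M : ℝ, ∀ x ∈ s, ‖lineIter G v j x‖ ≤ M)
      ⟨0, by simp⟩ (fun s t hst ⟨M, hM⟩ => ⟨M, fun x hx => hM x (hst hx)⟩) ?_ ?_
    · rintro s t ⟨M, hM⟩ ⟨N, hN⟩
      exact ⟨max M N, fun x hx => hx.elim (fun h => (hM x h).trans (le_max_left _ _))
        (fun h => (hN x h).trans (le_max_right _ _))⟩
    · intro x _
      obtain ⟨δ, hδ, M, hM⟩ := hG.locally_bounded_lineIter v j x
      exact ⟨Metric.ball x δ, mem_nhdsWithin_of_mem_nhds (Metric.ball_mem_nhds x hδ), M,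
        fun y hy => hM y hy⟩
  refine ⟨max M 0, fun x => ?_⟩
  by_cases hx : x ∈ tsupport G
  · exact (hM x hx).trans (le_max_left _ _)
  · rw [lineIter_eq_zero v j hx, norm_zero]
    exact le_max_right _ _

end

section
variable {V : Type*} [NormedAddCommGroup V] [InnerProductSpace ℝ V] [FiniteDimensional ℝ V]
  [MeasurableSpace V] [BorelSpace V] {G : V → ℂ}

/-- Each directional derivative is a pointwise limit of difference quotients of the previous one. -/
theorem ArcSmoothOn.measurable_lineIter (hG : ArcSmoothOn G univ) (v : V) (j : ℕ) :
    Measurable (lineIter G v j) := by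
  induction j with
  | zero =>
    have : lineIter G v 0 = G := by ext x; simp [lineIter]
    rw [this]
    exact (continuousOn_univ.1 (hG.continuousOn convex_univ)).measurable
  | succ j ih =>
    refine measurable_of_tendsto_metrizable
      (f := fun (n : ℕ) x => ((n : ℝ) + 1) • (lineIter G v j (x + (((n : ℝ) + 1)⁻¹) • v) -
        lineIter G v j x)) (fun n => ?_) ?_
    · exact Measurable.const_smul (M := ℝ) (((ih.comp (measurable_id.add_const _)).sub ih)) _
    · rw [tendsto_pi_nhds]
      intro x
      have h := (hG.hasLineDerivAt_lineIter v j x).tendsto_slope_zero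
      have h2 : Tendsto (fun n : ℕ => ((n : ℝ) + 1)⁻¹) atTop (𝓝[≠] 0) := by
        refine tendsto_nhdsWithin_iff.2 ⟨?_, Eventually.of_forall fun n => ?_⟩
        · simpa [one_div] using tendsto_one_div_add_atTop_nhds_zero_nat (𝕜 := ℝ)
        · simp only [mem_compl_iff, mem_singleton_iff, inv_eq_zero]; positivity
      simpa [Function.comp_def] using h.comp h2

theorem ArcSmoothOn.integrable_lineIter (hG : ArcSmoothOn G univ) (hGc : HasCompactSupport G)
    (v : V) (j : ℕ) : Integrable (lineIter G v j) := by
  obtain ⟨M, hM⟩ := hG.bounded_lineIter hGc v j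
  refine (integrableOn_iff_integrable_of_support_subset (s := tsupport G) fun x hx => ?_).1 ?_
  · by_contra h
    exact hx (lineIter_eq_zero v j h)
  · exact Measure.integrableOn_of_bounded hGc.isCompact.measure_lt_top.ne
      (hG.measurable_lineIter v j).aestronglyMeasurable (Eventually.of_forall hM)

open FourierTransform Real in
/-- The Fourier transform turns `∂ᵥ` into multiplication by `2πi⟪v, ξ⟫`. Continuity of `∂ᵥʲ G` is not
available here; integration by parts only uses line derivatives and integrability. -/
theorem ArcSmoothOn.fourier_lineIter (hG : ArcSmoothOn G univ) (hGc : HasCompactSupport G)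
    (v : V) (j : ℕ) (ξ : V) :
    𝓕 (lineIter G v j) ξ = ((2 * π * inner ℝ v ξ : ℝ) * Complex.I) ^ j * 𝓕 G ξ := by
  induction j with
  | zero =>
    have : lineIter G v 0 = G := by ext x; simp [lineIter]
    rw [this]; simp
  | succ j ih =>
    rw [pow_succ', mul_assoc, ← ih]
    simp only [Real.fourier_eq']
    set e : V → ℂ := fun x => Complex.exp (↑(-2 * π * inner ℝ x ξ) * Complex.I) with he
    have hen : ∀ x, ‖e x‖ = 1 := fun x => Complex.norm_exp_ofReal_mul_I _
    have hec : Continuous e := by fun_prop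
    set a : ℂ := ((2 * π * inner ℝ v ξ : ℝ) * Complex.I) with ha
    have hed : ∀ x, HasLineDerivAt ℝ e (-a * e x) x v := by
      intro x
      unfold HasLineDerivAt
      have h1 : HasDerivAt (fun t : ℝ => (-2 * π * inner ℝ (x + t • v) ξ : ℝ))
          (-2 * π * inner ℝ v ξ : ℝ) 0 := by
        simp only [inner_add_left, real_inner_smul_left]
        have := (((hasDerivAt_id (0 : ℝ)).mul_const (inner ℝ v ξ)).const_add
          (inner ℝ x ξ)).const_mul (-2 * π)
        simpa using this
      have h2 := (h1.ofReal_comp.mul_const Complex.I).cexp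
      simp only [zero_smul, add_zero] at h2
      refine h2.congr_deriv ?_
      simp only [he, ha]
      push_cast
      ring
    have hi : ∀ k, ∀ b : V → ℂ, Continuous b → (∀ x, ‖b x‖ ≤ ‖a‖ + 1) →
        Integrable (fun x => lineIter G v k x * b x) := fun k b hb hbb =>
      (hG.integrable_lineIter hGc v k).mul_bdd hb.aestronglyMeasurable
        (Eventually.of_forall hbb)
    -- integration by parts against the character `e`; the three conditions are integrability
    have key := integral_bilinear_hasLineDerivAt_right_eq_neg_left_of_integrable
      (μ := volume) (f := lineIter G v j) (f' := lineIter G v (j + 1)) (g := e)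
      (g' := fun x => -a * e x) (v := v) (B := ContinuousLinearMap.mul ℝ ℂ)
      (hi _ e hec fun x => by rw [hen]; linarith [norm_nonneg a])
      (hi _ _ (by fun_prop) fun x => by rw [norm_mul, hen, norm_neg]; linarith)
      (hi _ e hec fun x => by rw [hen]; linarith [norm_nonneg a])
      (fun x _ => hG.hasLineDerivAt_lineIter v j x) (fun x _ => hed x)
    simp only [ContinuousLinearMap.mul_apply'] at key
    change ∫ x, e x • lineIter G v (j + 1) x = a * ∫ x, e x • lineIter G v j x
    rw [← integral_const_mul]
    have h3 : ∀ x, e x • lineIter G v (j + 1) x = lineIter G v (j + 1) x * e x :=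
      fun x => by rw [smul_eq_mul, mul_comm]
    simp only [h3]
    rw [← neg_eq_iff_eq_neg] at key
    rw [← key, ← integral_neg]
    congr 1
    ext x
    rw [smul_eq_mul]
    ring

/-! ### Boman's theorem -/

section
variable {V : Type*} [NormedAddCommGroup V] [InnerProductSpace ℝ V] [FiniteDimensional ℝ V]
  [MeasurableSpace V] [BorelSpace V] {G : V → ℂ}

open FourierTransform Real in
/-- The Fourier transform of a compactly supported arc-smooth function decays rapidly: the bounds
`|⟪v, ξ⟫|ʲ ‖Ĝ(ξ)‖ ≤ ‖∂ᵥʲ G‖₁` for `v` in an orthonormal basis add up to a bound for `‖ξ‖ʲ`. -/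
theorem ArcSmoothOn.norm_pow_mul_fourier_le (hG : ArcSmoothOn G univ) (hGc : HasCompactSupport G)
    (j : ℕ) : ∃ K : ℝ, ∀ ξ, ‖ξ‖ ^ j * ‖𝓕 G ξ‖ ≤ K := by
  have hv : ∀ (v : V) (j : ℕ) (ξ : V),
      |inner ℝ v ξ| ^ j * ‖𝓕 G ξ‖ ≤ ∫ x, ‖lineIter G v j x‖ := by
    intro v j ξ
    have h1 : ‖𝓕 (lineIter G v j) ξ‖ ≤ ∫ x, ‖lineIter G v j x‖ :=
      VectorFourier.norm_fourierIntegral_le_integral_norm _ _ _ _ _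
    refine le_trans ?_ h1
    rw [hG.fourier_lineIter hGc, norm_mul, norm_pow, norm_mul, Complex.norm_I, mul_one,
      Complex.norm_real, Real.norm_eq_abs, abs_mul, abs_of_pos Real.two_pi_pos]
    gcongr
    exact le_mul_of_one_le_left (abs_nonneg _) (by linarith [Real.two_le_pi])
  obtain _ | j := j
  · refine ⟨∫ x, ‖lineIter G (0 : V) 0 x‖, fun ξ => ?_⟩
    simpa using hv 0 0 ξ
  let b := stdOrthonormalBasis ℝ V
  set d : ℝ := (((Finset.univ : Finset (Fin (Module.finrank ℝ V))).card : ℕ) : ℝ) with hd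
  have hd0 : 0 ≤ d := Nat.cast_nonneg _
  refine ⟨d ^ j * ∑ i, ∫ x, ‖lineIter G (b i) (j + 1) x‖, fun ξ => ?_⟩
  have h1 : ‖ξ‖ ≤ ∑ i, |inner ℝ (b i) ξ| := by
    conv_lhs => rw [← b.sum_repr' ξ]
    refine (norm_sum_le _ _).trans (Finset.sum_le_sum fun i _ => ?_)
    rw [norm_smul, b.norm_eq_one, mul_one, Real.norm_eq_abs]
  have h2 : ‖ξ‖ ^ (j + 1) ≤ d ^ j * ∑ i, |inner ℝ (b i) ξ| ^ (j + 1) := by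
    refine (pow_le_pow_left₀ (norm_nonneg _) h1 _).trans ?_
    rcases hd0.eq_or_lt with h0 | h0
    · have : IsEmpty (Fin (Module.finrank ℝ V)) := by
        rw [← Finset.univ_eq_empty_iff, ← Finset.card_eq_zero]
        exact Nat.cast_eq_zero.1 (hd.symm.trans h0.symm)
      simp
    · rw [← div_le_iff₀' (pow_pos h0 j)]
      exact pow_sum_div_card_le_sum_pow (fun i _ => abs_nonneg _) j
  calc _ ≤ (d ^ j * ∑ i, |inner ℝ (b i) ξ| ^ (j + 1)) * ‖𝓕 G ξ‖ := by gcongr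
    _ = d ^ j * ∑ i, |inner ℝ (b i) ξ| ^ (j + 1) * ‖𝓕 G ξ‖ := by rw [mul_assoc, Finset.sum_mul]
    _ ≤ _ := by
      gcongr with i
      exact hv _ _ _

open FourierTransform in
/-- Fourier inversion represents `G` through its rapidly decaying transform, so `G` is smooth. -/
theorem ArcSmoothOn.contDiff_of_hasCompactSupport (hG : ArcSmoothOn G univ)
    (hGc : HasCompactSupport G) : ContDiff ℝ ∞ G := by
  have hcont : Continuous G := continuousOn_univ.1 (hG.continuousOn convex_univ)
  have hint : Integrable G := hcont.integrable_of_hasCompactSupport hGc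
  have hFc : Continuous (𝓕 G) :=
    VectorFourier.fourierIntegral_continuous Real.continuous_fourierChar
      (innerSL ℝ).continuous₂ hint
  have hI : ∀ n : ℕ, Integrable (fun ξ => ‖ξ‖ ^ n * ‖𝓕 G ξ‖) := by
    intro n
    obtain ⟨K₀, hK₀⟩ := hG.norm_pow_mul_fourier_le hGc 0
    obtain ⟨K₁, hK₁⟩ := hG.norm_pow_mul_fourier_le hGc (n + (volume : Measure V).integrablePower)
    exact integrable_of_le_of_pow_mul_le (fun ξ => by simpa using hK₀ ξ) hK₁
      hFc.aestronglyMeasurable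
  have hFi : Integrable (𝓕 G) := by
    have := hI 0
    simp only [pow_zero, one_mul] at this
    exact (integrable_norm_iff hFc.aestronglyMeasurable).1 this
  have h1 : ContDiff ℝ ∞ (𝓕 (𝓕 G)) := Real.contDiff_fourier (N := ⊤) fun n _ => hI n
  have h2 : G = fun x => 𝓕 (𝓕 G) (-x) := by
    conv_lhs => rw [← hcont.fourierInv_fourier_eq hint hFi]
    ext x
    exact Real.fourierInv_eq_fourier_neg _ _
  rw [h2]
  exact h1.comp contDiff_neg

theorem ArcSmoothOn.contDiff_complex (hG : ArcSmoothOn G univ) : ContDiff ℝ ∞ G := by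
  refine contDiff_iff_contDiffAt.2 fun x₀ => ?_
  let χ : ContDiffBump x₀ := ⟨1, 2, one_pos, one_lt_two⟩
  have h1 : ArcSmoothOn (fun x => χ x • G x) univ := fun γ hγ hγu =>
    (χ.contDiff.comp hγ).smul (hG γ hγ hγu)
  have h2 : ContDiff ℝ ∞ (fun x => χ x • G x) :=
    h1.contDiff_of_hasCompactSupport χ.hasCompactSupport.smul_right
  refine h2.contDiffAt.congr_of_eventuallyEq ?_
  filter_upwards [χ.eventuallyEq_one] with x hx
  have hx : χ x = 1 := hx
  rw [hx, one_smul]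

/-- Boman's theorem: an arc-smooth map on a whole Euclidean space is smooth. -/
theorem ArcSmoothOn.contDiff {F : Type*} [NormedAddCommGroup F] [NormedSpace ℝ F]
    [FiniteDimensional ℝ F] {f : V → F} (hf : ArcSmoothOn f univ) : ContDiff ℝ ∞ f := by
  let b := Module.finBasis ℝ F
  have h1 : f = fun x => ∑ i, (b.coord i (f x)) • b i := by
    ext x
    simp [b.sum_repr]
  rw [h1]
  refine ContDiff.sum fun i _ => ContDiff.smul ?_ contDiff_const
  have h2 : ArcSmoothOn (fun x => ((b.coord i (f x) : ℝ) : ℂ)) univ := fun γ hγ hγu =>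
    Complex.ofRealCLM.contDiff.comp
      ((LinearMap.toContinuousLinearMap (b.coord i)).contDiff.comp (hf γ hγ hγu))
  have h3 := Complex.reCLM.contDiff.comp h2.contDiff_complex
  simpa [Function.comp_def] using h3

end

/-! ### One-sided derivatives in inward directions -/

/-- An even function of `u` which is twice differentiable at `0` is a right-differentiable function
of `r = u²`: from `φ u = φ 0 + (a / 2) u² + o(u²)`, the right derivative at `0` is `a / 2`. -/
theorem hasDerivWithinAt_comp_sqrt {F : Type*} [NormedAddCommGroup F] [NormedSpace ℝ F]
    {φ φ' : ℝ → F} {a : F} (hφ : ∀ u, HasDerivAt φ (φ' u) u) (heven : ∀ u, φ (-u) = φ u)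
    (hφ' : HasDerivAt φ' a 0) :
    HasDerivWithinAt (fun r => φ (√r)) ((1 / 2 : ℝ) • a) (Ici 0) 0 := by
  have h0 : φ' 0 = 0 := by
    have h1 : HasDerivAt (fun u => φ (-u)) (-φ' 0) 0 := by
      have := (hφ (-0)).scomp (0 : ℝ) (hasDerivAt_neg (0 : ℝ))
      simpa [Function.comp_def] using this
    simp only [heven] at h1
    have h2 := (hφ 0).unique h1
    have h3 : (2 : ℝ) • φ' 0 = 0 := by
      rw [two_smul]; nth_rw 1 [h2]; exact neg_add_cancel _
    exact (smul_eq_zero.1 h3).resolve_left two_ne_zero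
  rw [hasDerivWithinAt_iff_isLittleO, Asymptotics.isLittleO_iff]
  intro ε hε
  have h1 := (Asymptotics.isLittleO_iff.1 (hasDerivAt_iff_isLittleO.1 hφ')) hε
  obtain ⟨δ, hδ, h1⟩ := Metric.eventually_nhds_iff.1 h1
  have h2 : ∀ᶠ r in 𝓝[Ici 0] (0 : ℝ), √r < δ := by
    have : Tendsto (fun r => √r) (𝓝[Ici 0] 0) (𝓝 (√0)) :=
      (Real.continuous_sqrt.tendsto 0).mono_left nhdsWithin_le_nhds
    rw [Real.sqrt_zero] at this
    exact this.eventually (gt_mem_nhds hδ)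
  filter_upwards [h2, self_mem_nhdsWithin] with r hr hr0
  have hr0 : 0 ≤ r := hr0
  set u := √r with hu
  have hu0 : 0 ≤ u := Real.sqrt_nonneg r
  have hur : u ^ 2 = r := Real.sq_sqrt hr0
  -- mean value inequality on `[0, u]` for `φ s - (s² / 2) • a`, whose derivative is `φ' s - s • a`
  have h3 := norm_image_sub_le_of_norm_deriv_le_segment'
    (f := fun s => φ s - (s ^ 2 / 2) • a) (f' := fun s => φ' s - s • a) (a := 0) (b := u)
    (C := ε * u) (fun s _ => by
      have h5 : HasDerivAt (fun s : ℝ => s ^ 2 / 2) s s := by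
        have := (hasDerivAt_pow 2 s).div_const 2
        simpa using this
      exact ((hφ s).sub (h5.smul_const a)).hasDerivWithinAt) (fun s hs => by
      have h4 := h1 (y := s) (by
        rw [Real.dist_eq, sub_zero, abs_of_nonneg hs.1]; exact hs.2.trans hr)
      simp only [h0, sub_zero] at h4
      refine h4.trans ?_
      rw [Real.norm_of_nonneg hs.1]
      exact mul_le_mul_of_nonneg_left hs.2.le hε.le) u ⟨hu0, le_rfl⟩
  simp only [Real.sqrt_zero, sub_zero]
  have h6 : φ u - φ 0 - r • (1 / 2 : ℝ) • a = φ u - (u ^ 2 / 2) • a - (φ 0 - ((0 : ℝ) ^ 2 / 2) • a) := by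
    rw [hur, smul_smul]
    simp only [ne_eq, OfNat.ofNat_ne_zero, not_false_eq_true, zero_pow, zero_div, zero_smul,
      sub_zero, mul_one_div]
    abel
  rw [h6, Real.norm_of_nonneg hr0, ← hur]
  refine h3.trans (le_of_eq ?_)
  ring

/-- One-sided derivatives of `f` in a direction `w` pointing into `C` exist and vary smoothly along
smooth curves. With `ρ u = u² / (1 + u²) ∈ [0, 1]`, the map `Φ (t, u) = f (γ t + ρ u • w)` is
arc-smooth on the plane, hence smooth by Boman's theorem, and it is even in `u`; the derivative in
`w` at `γ t` is therefore `½ ∂ᵤ² Φ (t, 0)`. -/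
theorem ArcSmoothOn.exists_contDiff_ray_deriv {E F : Type*} [NormedAddCommGroup E]
    [NormedSpace ℝ E] [NormedAddCommGroup F] [NormedSpace ℝ F] [FiniteDimensional ℝ F]
    {f : E → F} {A C : Set E} {w : E} (hf : ArcSmoothOn f C)
    (hAC : ∀ x ∈ A, ∀ s ∈ Icc (0 : ℝ) 1, x + s • w ∈ C) {γ : ℝ → E} (hγ : ContDiff ℝ ∞ γ)
    (hγA : ∀ t, γ t ∈ A) :
    ∃ g : ℝ → F, ContDiff ℝ ∞ g ∧
      ∀ t, HasDerivWithinAt (fun s : ℝ => f (γ t + s • w)) (g t) (Ici 0) 0 := by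
  let ρ : ℝ → ℝ := fun u => u ^ 2 / (1 + u ^ 2)
  have hpos : ∀ u : ℝ, 0 < 1 + u ^ 2 := fun u => by positivity
  have hρ : ContDiff ℝ ∞ ρ :=
    (contDiff_id.pow 2).div (contDiff_const.add (contDiff_id.pow 2)) fun u => (hpos u).ne'
  have hρI : ∀ u, ρ u ∈ Icc (0 : ℝ) 1 := fun u =>
    ⟨by positivity, (div_le_one (hpos u)).2 (by linarith)⟩
  let Φ : EuclideanSpace ℝ (Fin 2) → F := fun p => f (γ (p 0) + ρ (p 1) • w)
  have hΦ : ContDiff ℝ ∞ Φ := by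
    refine ArcSmoothOn.contDiff fun c hc _ => ?_
    have hci : ∀ i, ContDiff ℝ ∞ fun t => c t i := fun i => contDiff_euclidean.1 hc i
    exact hf (fun t => γ (c t 0) + ρ (c t 1) • w)
      ((hγ.comp (hci 0)).add ((hρ.comp (hci 1)).smul contDiff_const))
      fun t => hAC _ (hγA _) _ (hρI _)
  let e : EuclideanSpace ℝ (Fin 2) := EuclideanSpace.single 1 1
  let G₁ : EuclideanSpace ℝ (Fin 2) → F := fun p => fderiv ℝ Φ p e
  have hG₁ : ContDiff ℝ ∞ G₁ := (hΦ.fderiv_right (m := ∞) (by norm_cast)).clm_apply contDiff_const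
  let G₂ : EuclideanSpace ℝ (Fin 2) → F := fun p => fderiv ℝ G₁ p e
  have hG₂ : ContDiff ℝ ∞ G₂ := (hG₁.fderiv_right (m := ∞) (by norm_cast)).clm_apply contDiff_const
  let e₀ : EuclideanSpace ℝ (Fin 2) := EuclideanSpace.single 0 1
  refine ⟨fun t => (1 / 2 : ℝ) • G₂ (t • e₀), contDiff_const.smul
    (hG₂.comp (contDiff_id.smul contDiff_const)), fun t => ?_⟩
  have hline : ∀ u : ℝ, HasDerivAt (fun u : ℝ => t • e₀ + u • e) e u := fun u => by
    simpa using ((hasDerivAt_id u).smul_const e).const_add (t • e₀)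
  have h1 : ∀ u : ℝ, HasDerivAt (fun u : ℝ => Φ (t • e₀ + u • e)) (G₁ (t • e₀ + u • e)) u :=
    fun u => ((hΦ.differentiable (by simp) _).hasFDerivAt).comp_hasDerivAt u (hline u)
  have h2 : HasDerivAt (fun u : ℝ => G₁ (t • e₀ + u • e)) (G₂ (t • e₀)) 0 := by
    have := ((hG₁.differentiable (by simp) _).hasFDerivAt).comp_hasDerivAt (0 : ℝ) (hline 0)
    simpa [G₂, Function.comp_def] using this
  have hΦe : ∀ u : ℝ, Φ (t • e₀ + u • e) = f (γ t + ρ u • w) := by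
    intro u
    simp [Φ, e, e₀]
  have h3 := hasDerivWithinAt_comp_sqrt h1 (fun u => by rw [hΦe, hΦe]; simp [ρ]) h2
  simp only [hΦe] at h3
  -- substitute `r = s / (1 - s)`, so that `ρ (√r) = s`
  have h4 : HasDerivWithinAt (fun s : ℝ => s / (1 - s)) 1 (Icc 0 (1 / 2)) 0 := by
    have := ((hasDerivAt_id' (0 : ℝ)).fun_div ((hasDerivAt_id' (0 : ℝ)).const_sub 1) (by simp))
    simpa using this.hasDerivWithinAt
  have h5 := HasDerivWithinAt.scomp_of_eq (0 : ℝ) h3 h4 (fun s hs =>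
    div_nonneg hs.1 (by linarith [hs.2])) (by simp)
  rw [one_smul] at h5
  have h6 : HasDerivWithinAt (fun s : ℝ => f (γ t + s • w)) ((1 / 2 : ℝ) • G₂ (t • e₀))
      (Icc 0 (1 / 2)) 0 := by
    refine h5.congr_of_mem (fun s hs => ?_) ⟨le_rfl, by norm_num⟩
    have h7 : 0 < 1 - s := by linarith [hs.2]
    have h8 : ρ (√(s / (1 - s))) = s := by
      simp only [ρ, Real.sq_sqrt (div_nonneg hs.1 h7.le)]
      field_simp
      ring
    simp only [Function.comp_apply, h8]
  refine h6.mono_of_mem_nhdsWithin ?_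
  exact Icc_mem_nhdsGE (by norm_num)

/-! ### Fréchet differentiability from one-sided derivatives -/

section
variable {E F : Type*} [NormedAddCommGroup E] [NormedSpace ℝ E] [NormedAddCommGroup F]
  [NormedSpace ℝ F]

/-- Mean value inequality on the ray from `x` in the direction `w`, with right derivatives `D`
within `η` of `d`. -/
theorem norm_sub_sub_smul_le {f D : E → F} {x w : E} {a η : ℝ} {d : F} (ha : 0 ≤ a)
    (hc : ContinuousOn (fun s : ℝ => f (x + s • w)) (Icc 0 a))
    (hD : ∀ s ∈ Ico 0 a, HasDerivWithinAt (fun r : ℝ => f (x + s • w + r • w))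
      (D (x + s • w)) (Ici 0) 0)
    (hη : ∀ s ∈ Ico 0 a, ‖D (x + s • w) - d‖ ≤ η) :
    ‖f (x + a • w) - f x - a • d‖ ≤ η * a := by
  have h := norm_image_sub_le_of_norm_deriv_right_le_segment
    (f := fun s : ℝ => f (x + s • w) - s • d) (f' := fun s => D (x + s • w) - d) (a := 0) (b := a)
    (C := η) (hc.sub (by fun_prop)) (fun s hs => ?_) hη a ⟨ha, le_rfl⟩
  · have h2 : f (x + a • w) - a • d - (f (x + (0 : ℝ) • w) - (0 : ℝ) • d) =
        f (x + a • w) - f x - a • d := by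
      simp only [zero_smul, add_zero, sub_zero]; abel
    rwa [h2, sub_zero] at h
  · have h3 : HasDerivWithinAt (fun r : ℝ => r - s) 1 (Ici s) s :=
      ((hasDerivAt_id' s).sub_const s).hasDerivWithinAt
    have h4 := HasDerivWithinAt.scomp_of_eq s (hD s hs) h3
      (fun r hr => sub_nonneg.2 (show s ≤ r from hr)) (sub_self s).symm
    rw [one_smul] at h4
    have h5 : (fun r : ℝ => f (x + s • w + r • w)) ∘ (fun r : ℝ => r - s) =
        fun r => f (x + r • w) := by
      ext r
      simp only [Function.comp_apply]
      rw [add_assoc, ← add_smul, add_sub_cancel]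
    rw [h5] at h4
    have h6 := ((hasDerivAt_id' s).smul_const d).hasDerivWithinAt (s := Ici s)
    rw [one_smul] at h6
    exact h4.sub h6

/-- First order expansion for increments in the cone spanned by the inward directions `w i`,
uniformly in the base point `x` near `x₀`: all intermediate points stay in `C`, so the directions can
be added one at a time. -/
theorem exists_norm_increment_le {ι : Type*} [Fintype ι] {f : E → F} {D : ι → E → F} {C : Set E}
    {x₀ : E} {r : ℝ} (hr : 0 < r) {w : ι → E} (hf : ContinuousOn f C)
    (hw : ∀ i, ∀ x ∈ C ∩ Metric.ball x₀ r, ∀ s ∈ Icc (0 : ℝ) 1, x + s • w i ∈ C)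
    (hx₀ : x₀ ∈ C) (hDc : ∀ i, ContinuousOn (D i) (C ∩ Metric.ball x₀ r))
    (hD : ∀ i, ∀ x ∈ C ∩ Metric.ball x₀ r,
      HasDerivWithinAt (fun s : ℝ => f (x + s • w i)) (D i x) (Ici 0) 0)
    {η : ℝ} (hη : 0 < η) :
    ∃ δ > 0, ∀ x ∈ C, dist x x₀ < δ → ∀ a : ι → ℝ, (∀ i, 0 ≤ a i) → (∀ i, a i < δ) →
      ‖f (x + ∑ i, a i • w i) - f x - ∑ i, a i • D i x₀‖ ≤ η * ∑ i, a i := by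
  classical
  have h1 : ∀ᶠ x in 𝓝[C ∩ Metric.ball x₀ r] x₀, ∀ i, ‖D i x - D i x₀‖ < η := by
    refine eventually_all.2 fun i => ?_
    have := hDc i x₀ ⟨hx₀, Metric.mem_ball_self hr⟩
    filter_upwards [Metric.tendsto_nhds.1 this η hη] with x hx
    rwa [← dist_eq_norm]
  obtain ⟨δ₁, hδ₁, h1⟩ := Metric.mem_nhdsWithin_iff.1 h1
  set W : ℝ := ∑ i, ‖w i‖ with hW
  have hW0 : 0 ≤ W := Finset.sum_nonneg fun i _ => norm_nonneg _
  set δ₂ := min δ₁ r with hδ₂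
  have hδ₂0 : 0 < δ₂ := lt_min hδ₁ hr
  refine ⟨min 1 (δ₂ / (1 + W)), lt_min one_pos (by positivity), fun x hx hxd a ha0 haδ => ?_⟩
  have ha1 : ∀ i, a i ≤ 1 := fun i => (haδ i).le.trans (min_le_left _ _)
  have haW : ∀ i, a i ≤ δ₂ / (1 + W) := fun i => (haδ i).le.trans (min_le_right _ _)
  have hxd : dist x x₀ < δ₂ / (1 + W) := hxd.trans_le (min_le_right _ _)
  have hdist : ∀ b : ι → ℝ, (∀ i, 0 ≤ b i) → (∀ i, b i ≤ a i) →
      x + ∑ i, b i • w i ∈ Metric.ball x₀ δ₂ := by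
    intro b hb0 hba
    rw [Metric.mem_ball, dist_eq_norm, add_sub_right_comm]
    refine (norm_add_le _ _).trans_lt ?_
    rw [← dist_eq_norm]
    have h2 : ‖∑ i, b i • w i‖ ≤ δ₂ / (1 + W) * W := by
      refine (norm_sum_le _ _).trans ?_
      rw [hW, Finset.mul_sum]
      refine Finset.sum_le_sum fun i _ => ?_
      rw [norm_smul, Real.norm_of_nonneg (hb0 i)]
      exact mul_le_mul_of_nonneg_right ((hba i).trans (haW i)) (norm_nonneg _)
    calc _ < δ₂ / (1 + W) + δ₂ / (1 + W) * W := add_lt_add_of_lt_of_le hxd h2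
      _ = δ₂ := by field_simp
  -- increments along the directions in `S`, one direction at a time
  have key : ∀ S : Finset ι, x + ∑ i ∈ S, a i • w i ∈ C ∧
      ‖f (x + ∑ i ∈ S, a i • w i) - f x - ∑ i ∈ S, a i • D i x₀‖ ≤ η * ∑ i ∈ S, a i := by
    intro S
    induction S using Finset.induction_on with
    | empty => simpa using hx
    | insert i S hi ih =>
      obtain ⟨ihC, ih⟩ := ih
      set x' := x + ∑ i ∈ S, a i • w i with hx'
      have hball : ∀ s ∈ Icc 0 (a i), x' + s • w i ∈ Metric.ball x₀ δ₂ := by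
        intro s hs
        have h3 := hdist (fun k => if k = i then s else if k ∈ S then a k else 0)
          (fun k => by split_ifs <;> first | exact hs.1 | exact ha0 k | exact le_rfl)
          (fun k => by
            split_ifs with h h'
            · rw [h]; exact hs.2
            · exact le_rfl
            · exact ha0 k)
        convert h3 using 1
        rw [hx', add_assoc]
        congr 1
        rw [← Finset.sum_subset (Finset.subset_univ (insert i S)), Finset.sum_insert hi, add_comm]
        · congr 1
          · simp
          · refine Finset.sum_congr rfl fun k hk => ?_
            have : k ≠ i := fun h => hi (h ▸ hk)
            simp [this, hk]
        · intro k _ hk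
          rw [Finset.mem_insert, not_or] at hk
          simp [hk.1, hk.2]
      have hx'b : x' ∈ C ∩ Metric.ball x₀ r := by
        have h0 := hball 0 ⟨le_rfl, ha0 i⟩
        rw [zero_smul, add_zero] at h0
        exact ⟨ihC, Metric.ball_subset_ball (min_le_right δ₁ r) h0⟩
      have hmem : ∀ s ∈ Icc 0 (a i), x' + s • w i ∈ C := fun s hs =>
        hw i x' hx'b s ⟨hs.1, hs.2.trans (ha1 i)⟩
      have hmem' : ∀ s ∈ Icc 0 (a i), x' + s • w i ∈ C ∩ Metric.ball x₀ r := fun s hs =>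
        ⟨hmem s hs, Metric.ball_subset_ball (min_le_right _ _) (hball s hs)⟩
      have h4 := norm_sub_sub_smul_le (f := f) (D := D i) (x := x') (w := w i) (d := D i x₀)
        (η := η) (ha0 i) (hf.comp (by fun_prop) hmem)
        (fun s hs => hD i _ (hmem' s ⟨hs.1, hs.2.le⟩))
        (fun s hs => (h1 ⟨Metric.ball_subset_ball (min_le_left _ _) (hball s ⟨hs.1, hs.2.le⟩),
          hmem' s ⟨hs.1, hs.2.le⟩⟩ i).le)
      rw [Finset.sum_insert hi, Finset.sum_insert hi, Finset.sum_insert hi,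
        add_comm (a i • w i), ← add_assoc, ← hx']
      refine ⟨hmem _ ⟨ha0 i, le_rfl⟩, ?_⟩
      have h5 : f (x' + a i • w i) - f x - (a i • D i x₀ + ∑ i ∈ S, a i • D i x₀) =
        (f (x' + a i • w i) - f x' - a i • D i x₀) + (f x' - f x - ∑ i ∈ S, a i • D i x₀) := by
        abel
      rw [h5, mul_add]
      exact (norm_add_le _ _).trans (add_le_add h4 ih)
  exact (key Finset.univ).2

/-- The continuous linear map sending the basis vector `b i` to `d i`. -/
noncomputable def basisCLM [FiniteDimensional ℝ E] {ι : Type*} [Fintype ι]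
    (b : Module.Basis ι ℝ E) (d : ι → F) : E →L[ℝ] F :=
  ∑ i, (LinearMap.toContinuousLinearMap (b.coord i)).smulRight (d i)

theorem basisCLM_apply [FiniteDimensional ℝ E] {ι : Type*} [Fintype ι]
    (b : Module.Basis ι ℝ E) (d : ι → F) (x : E) :
    basisCLM b d x = ∑ i, b.coord i x • d i := by
  simp [basisCLM]

/-- Continuous one-sided derivatives along a basis of inward directions give a Fréchet derivative
within `C`. For `y ∈ C` near `x₀`, write `y - x₀ = ∑ a i • w i`; moving `x₀` by the positive parts of
the `a i` and `y` by the negative parts leads to the same point of `C`, along directions in which the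
expansion of `exists_norm_increment_le` holds. -/
theorem hasFDerivWithinAt_of_ray_deriv [FiniteDimensional ℝ E] {ι : Type*} [Fintype ι] {f : E → F}
    {D : ι → E → F} {C : Set E} {x₀ : E} {r : ℝ} (hr : 0 < r) (w : Module.Basis ι ℝ E)
    (hf : ContinuousOn f C)
    (hw : ∀ i, ∀ x ∈ C ∩ Metric.ball x₀ r, ∀ s ∈ Icc (0 : ℝ) 1, x + s • w i ∈ C)
    (hx₀ : x₀ ∈ C) (hDc : ∀ i, ContinuousOn (D i) (C ∩ Metric.ball x₀ r))
    (hD : ∀ i, ∀ x ∈ C ∩ Metric.ball x₀ r,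
      HasDerivWithinAt (fun s : ℝ => f (x + s • w i)) (D i x) (Ici 0) 0) :
    HasFDerivWithinAt f (basisCLM w fun i => D i x₀) C x₀ := by
  rw [hasFDerivWithinAt_iff_isLittleO, Asymptotics.isLittleO_iff]
  intro ε hε
  set K : ℝ := ∑ i, ‖LinearMap.toContinuousLinearMap (w.coord i)‖ with hK
  have hK0 : 0 ≤ K := Finset.sum_nonneg fun i _ => norm_nonneg _
  obtain ⟨δ, hδ, H⟩ := exists_norm_increment_le hr hf hw hx₀ hDc hD
    (η := ε / (1 + K)) (by positivity)
  have hcoord : ∀ y i, |w.coord i y| ≤ ‖LinearMap.toContinuousLinearMap (w.coord i)‖ * ‖y‖ :=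
    fun y i => (LinearMap.toContinuousLinearMap (w.coord i)).le_opNorm y
  rw [eventually_nhdsWithin_iff]
  filter_upwards [Metric.ball_mem_nhds x₀ (show 0 < δ / (1 + K) by positivity)] with y hy hyC
  rw [Metric.mem_ball] at hy
  have hδ' : δ / (1 + K) ≤ δ := div_le_self hδ.le (by linarith)
  set a : ι → ℝ := fun i => w.coord i (y - x₀) with ha
  have haδ : ∀ i, |a i| < δ := by
    intro i
    have h1 : ‖LinearMap.toContinuousLinearMap (w.coord i)‖ ≤ K :=
      Finset.single_le_sum (f := fun i => ‖LinearMap.toContinuousLinearMap (w.coord i)‖)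
        (fun i _ => norm_nonneg _) (Finset.mem_univ i)
    have h2 : ‖y - x₀‖ < δ / (1 + K) := by rwa [← dist_eq_norm]
    calc |a i| ≤ ‖LinearMap.toContinuousLinearMap (w.coord i)‖ * ‖y - x₀‖ := hcoord _ _
      _ ≤ (1 + K) * ‖y - x₀‖ := by gcongr; linarith
      _ < (1 + K) * (δ / (1 + K)) := by gcongr
      _ = δ := by field_simp
  -- both `x₀` and `y` are moved inwards, to the common point `z`
  have hp := H x₀ hx₀ (by simpa using hδ) (fun i => max (a i) 0) (fun i => le_max_right _ _)
    fun i => max_lt ((le_abs_self _).trans_lt (haδ i)) hδ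
  have hq := H y hyC (hy.trans_le hδ') (fun i => max (-a i) 0) (fun i => le_max_right _ _)
    fun i => max_lt ((neg_le_abs _).trans_lt (haδ i)) hδ
  have hpq : ∀ i, max (a i) 0 = a i + max (-a i) 0 := fun i => by
    rcases le_total (a i) 0 with h | h
    · rw [max_eq_right h, max_eq_left (by linarith)]; ring
    · rw [max_eq_left h, max_eq_right (by linarith)]; ring
  have hpq' : ∀ i, max (a i) 0 + max (-a i) 0 = |a i| := fun i => by
    rcases le_total (a i) 0 with h | h
    · rw [max_eq_right h, max_eq_left (by linarith), abs_of_nonpos h]; ring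
    · rw [max_eq_left h, max_eq_right (by linarith), abs_of_nonneg h]; ring
  have hz : x₀ + ∑ i, max (a i) 0 • w i = y + ∑ i, max (-a i) 0 • w i := by
    have h3 : ∑ i, a i • w i = y - x₀ := w.sum_repr (y - x₀)
    simp only [hpq, add_smul, Finset.sum_add_distrib, h3]
    abel
  have hL : (basisCLM w fun i => D i x₀) (y - x₀) =
      ∑ i, max (a i) 0 • D i x₀ - ∑ i, max (-a i) 0 • D i x₀ := by
    rw [basisCLM_apply, ← Finset.sum_sub_distrib]
    refine Finset.sum_congr rfl fun i _ => ?_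
    rw [← sub_smul, hpq i, add_sub_cancel_right]
  rw [hz] at hp
  have h4 : f y - f x₀ - (basisCLM w fun i => D i x₀) (y - x₀) =
      (f (y + ∑ i, max (-a i) 0 • w i) - f x₀ - ∑ i, max (a i) 0 • D i x₀) -
      (f (y + ∑ i, max (-a i) 0 • w i) - f y - ∑ i, max (-a i) 0 • D i x₀) := by
    rw [hL]; abel
  rw [h4]
  calc _ ≤ ε / (1 + K) * ∑ i, max (a i) 0 + ε / (1 + K) * ∑ i, max (-a i) 0 :=
        (norm_sub_le _ _).trans (add_le_add hp hq)
    _ = ε / (1 + K) * ∑ i, |a i| := by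
        rw [← mul_add, ← Finset.sum_add_distrib]; simp only [hpq']
    _ ≤ ε / (1 + K) * (K * ‖y - x₀‖) := by
        gcongr
        rw [hK, Finset.sum_mul]
        exact Finset.sum_le_sum fun i _ => hcoord _ i
    _ ≤ ε / (1 + K) * ((1 + K) * ‖y - x₀‖) := by gcongr; linarith
    _ = ε * ‖y - x₀‖ := by field_simp

end

/-! ### Smoothness on convex sets -/

section
variable {E F : Type*} [NormedAddCommGroup E] [InnerProductSpace ℝ E] [FiniteDimensional ℝ E]
  [NormedAddCommGroup F] [NormedSpace ℝ F]

/-- Near a point `x₀`, directions close to `p - x₀` with `p` interior to `C` point into `C`; they form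
an open set, which contains a basis. -/
theorem exists_inward_basis {C : Set E} (hC : Convex ℝ C) (hint : (interior C).Nonempty) (x₀ : E) :
    ∃ (s : Set E) (_ : Fintype s) (w : Module.Basis s ℝ E) (r : ℝ), 0 < r ∧
      ∀ i, ∀ x ∈ C ∩ Metric.ball x₀ r, ∀ s ∈ Icc (0 : ℝ) 1, x + s • w i ∈ C := by
  obtain ⟨p, hp⟩ := hint
  obtain ⟨ρ, hρ, hball⟩ := Metric.isOpen_iff.1 isOpen_interior p hp
  have hspan : ⊤ ≤ Submodule.span ℝ (Metric.ball (p - x₀) (ρ / 2)) := by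
    refine le_of_eq (Eq.symm ?_)
    apply (Submodule.span ℝ (Metric.ball (p - x₀) (ρ / 2))).eq_top_of_nonempty_interior'
    refine ⟨p - x₀, interior_mono Submodule.subset_span ?_⟩
    rw [Metric.isOpen_ball.interior_eq]
    exact Metric.mem_ball_self (half_pos hρ)
  let w := Module.Basis.ofSpan hspan
  have hw : ∀ i, w i ∈ Metric.ball (p - x₀) (ρ / 2) := fun i =>
    Module.Basis.ofSpan_subset hspan ⟨i, rfl⟩
  refine ⟨_, FiniteDimensional.fintypeBasisIndex w, w, ρ / 2, half_pos hρ, ?_⟩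
  intro i x hx s hs
  have h1 : x + w i ∈ C := by
    apply interior_subset (hball _)
    have h2 := hw i
    have h3 := hx.2
    rw [Metric.mem_ball, dist_eq_norm] at h2 h3 ⊢
    calc ‖x + w i - p‖ = ‖(x - x₀) + (w i - (p - x₀))‖ := by congr 1; abel
      _ ≤ _ := norm_add_le _ _
      _ < ρ := by linarith
  have := hC.add_smul_sub_mem hx.1 h1 hs
  simpa using this

/-- An arc-smooth map on a convex set with interior points is differentiable within the set, and its
derivative is locally arc-smooth. -/
theorem ArcSmoothOn.exists_hasFDerivWithinAt [FiniteDimensional ℝ F] {f : E → F} {C : Set E}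
    (hf : ArcSmoothOn f C) (hC : Convex ℝ C) (hint : (interior C).Nonempty) (x₀ : E) :
    ∃ (r : ℝ) (f' : E → E →L[ℝ] F), 0 < r ∧ ArcSmoothOn f' (C ∩ Metric.ball x₀ r) ∧
      ∀ x ∈ C ∩ Metric.ball x₀ r, HasFDerivWithinAt f (f' x) C x := by
  obtain ⟨ι, _, w, r, hr, hw⟩ := exists_inward_basis hC hint x₀
  set A := C ∩ Metric.ball x₀ r with hA
  let D : ι → E → F := fun i x => derivWithin (fun s : ℝ => f (x + s • w i)) (Ici 0) 0
  have hu : UniqueDiffWithinAt ℝ (Ici (0 : ℝ)) 0 := uniqueDiffOn_Ici 0 0 self_mem_Ici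
  have hD : ∀ i, ∀ x ∈ A, HasDerivWithinAt (fun s : ℝ => f (x + s • w i)) (D i x) (Ici 0) 0 := by
    intro i x hx
    obtain ⟨g, -, hg⟩ := hf.exists_contDiff_ray_deriv (hw i) (contDiff_const (c := x))
      (fun _ => hx)
    exact (hg 0).differentiableWithinAt.hasDerivWithinAt
  have hDs : ∀ i, ArcSmoothOn (D i) A := by
    intro i γ hγ hγA
    obtain ⟨g, hg, hg'⟩ := hf.exists_contDiff_ray_deriv (hw i) hγ hγA
    convert hg using 1
    ext1 t
    exact (hg' t).derivWithin hu
  have hDc : ∀ i, ContinuousOn (D i) A := fun i =>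
    (hDs i).continuousOn (hC.inter (convex_ball _ _))
  refine ⟨r, fun x => basisCLM w fun i => D i x, hr, ?_, ?_⟩
  · intro γ hγ hγA
    rw [contDiff_clm_apply_iff]
    intro y
    simp only [Function.comp_apply, basisCLM_apply]
    exact ContDiff.sum fun i _ => contDiff_const.smul (hDs i γ hγ hγA)
  · intro x hx
    obtain ⟨r', hr', hsub⟩ := Metric.isOpen_iff.1 Metric.isOpen_ball x hx.2
    have hsub' : C ∩ Metric.ball x r' ⊆ A := inter_subset_inter_right _ hsub
    exact hasFDerivWithinAt_of_ray_deriv hr' w (hf.continuousOn hC)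
      (fun i y hy => hw i y (hsub' hy)) hx.1 (fun i => (hDc i).mono hsub')
      (fun i y hy => hD i y (hsub' hy))

/-- Arc-smoothness is a local property: near a given time, a curve agrees with a reparametrization
all of whose values lie in a small ball. -/
theorem ArcSmoothOn.of_locally {E F : Type*} [NormedAddCommGroup E]
    [NormedSpace ℝ E] [NormedAddCommGroup F] [NormedSpace ℝ F] {f : E → F} {C : Set E}
    (h : ∀ x₀ ∈ C, ∃ r > 0, ArcSmoothOn f (C ∩ Metric.ball x₀ r)) : ArcSmoothOn f C := by
  intro γ hγ hγC
  rw [contDiff_iff_contDiffAt]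
  intro t₀
  obtain ⟨r, hr, H⟩ := h (γ t₀) (hγC t₀)
  obtain ⟨δ, hδ, hsub⟩ := Metric.continuousAt_iff.1 hγ.continuous.continuousAt r hr
  let χ : ContDiffBump t₀ := ⟨δ / 4, δ / 2, by positivity, by linarith⟩
  -- a reparametrization which is the identity near `t₀` and has values close to `t₀`
  let θ : ℝ → ℝ := fun t => t₀ + χ t * (t - t₀)
  have hθ : ContDiff ℝ ∞ θ := contDiff_const.add (χ.contDiff.mul (contDiff_id.sub contDiff_const))
  have hθδ : ∀ t, dist (θ t) t₀ < δ := by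
    intro t
    have h1 : dist (θ t) t₀ = χ t * |t - t₀| := by
      rw [Real.dist_eq, add_sub_cancel_left, abs_mul, abs_of_nonneg χ.nonneg]
    rw [h1]
    by_cases ht : dist t t₀ < δ / 2
    · rw [← Real.dist_eq]
      have := mul_le_mul_of_nonneg_right (χ.le_one (x := t)) (dist_nonneg (x := t) (y := t₀))
      linarith
    · rw [χ.zero_of_le_dist (not_lt.1 ht), zero_mul]
      exact hδ
  have h2 := H (γ ∘ θ) (hγ.comp hθ) fun t => ⟨hγC _, hsub (hθδ t)⟩
  refine h2.contDiffAt.congr_of_eventuallyEq ?_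
  filter_upwards [χ.eventuallyEq_one] with t ht
  simp [θ, ht]

/-- Induction on `k`, applying the hypothesis for `k` to the arc-smooth map `fderivWithin ℝ f C`.
The domain and target share a universe because `F` is replaced by `E →L[ℝ] F`. -/
theorem ArcSmoothOn.contDiffOn_nat {E : Type u} [NormedAddCommGroup E] [InnerProductSpace ℝ E]
    [FiniteDimensional ℝ E] {C : Set E} (hC : Convex ℝ C) (hint : (interior C).Nonempty)
    (k : ℕ) : ∀ {F : Type u} [NormedAddCommGroup F] [NormedSpace ℝ F] [FiniteDimensional ℝ F]
      {f : E → F}, ArcSmoothOn f C → ContDiffOn ℝ k f C := by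
  induction k with
  | zero =>
    intro F _ _ _ f hf
    exact contDiffOn_zero.2 (hf.continuousOn hC)
  | succ k ih =>
    intro F _ _ _ f hf
    have hu := uniqueDiffOn_convex hC hint
    rw [Nat.cast_succ]
    refine contDiffOn_succ_of_fderivWithin ?_ (by simp) (ih ?_)
    · intro x hx
      obtain ⟨r, f', hr, -, h⟩ := hf.exists_hasFDerivWithinAt hC hint x
      exact (h x ⟨hx, Metric.mem_ball_self hr⟩).differentiableWithinAt
    · refine ArcSmoothOn.of_locally fun x₀ _ => ?_
      obtain ⟨r, f', hr, hf', h⟩ := hf.exists_hasFDerivWithinAt hC hint x₀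
      refine ⟨r, hr, fun γ hγ hγA => ?_⟩
      convert hf' γ hγ hγA using 1
      ext1 t
      exact (h _ (hγA t)).fderivWithin (hu _ (hγA t).1)

end

end

/-- for convex sets C ⊆ ℝⁿ and C' ⊆ ℝᵐ with nonempty interior, a map
f sending C into C' is smooth on C (has continuous derivatives of all orders on C,
in the within-C sense) if and only if f ∘ γ is a smooth curve for every smooth curve
γ : ℝ → ℝⁿ with image contained in C. -/
theorem statement0 {n m : ℕ}
    (C : Set (EuclideanSpace ℝ (Fin n))) (C' : Set (EuclideanSpace ℝ (Fin m)))
    (hC : Convex ℝ C) (hCint : (interior C).Nonempty)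
    (hC' : Convex ℝ C') (hC'int : (interior C').Nonempty)
    (f : EuclideanSpace ℝ (Fin n) → EuclideanSpace ℝ (Fin m))
    (hf : Set.MapsTo f C C') :
    ContDiffOn ℝ (⊤ : ℕ∞) f C ↔
      ∀ γ : ℝ → EuclideanSpace ℝ (Fin n),
        ContDiff ℝ (⊤ : ℕ∞) γ → Set.range γ ⊆ C → ContDiff ℝ (⊤ : ℕ∞) (f ∘ γ) := by
  constructor
  · intro h γ hγ hγC
    exact h.comp_contDiff hγ fun t => hγC (mem_range_self t)
  · intro h
    have hA : ArcSmoothOn f C := fun γ hγ hγC => h γ hγ (range_subset_iff.2 hγC)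
    exact contDiffOn_infty.2 fun k => hA.contDiffOn_nat hC hCint k
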